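/- (Key step (3.3) in the proof of Theorem 2.1(a),(c)) Let G ⊆ [0,∞) be a Borel set and β ∈ (0, d). If C_{g_{d−β,+}}(G) > 0, then there exists μ ∈ P(G) such that ∫_{ℝ^d} [∫∫_{G×G} Re χ_ξ(t−s) μ(dt) μ(ds)] ‖ξ‖^{β−d} dξ < +∞ and ∫_{ℝ^d} [∫∫_{G×G} max(−Re χ_ξ(t−s), 0) μ(dt) μ(ds)] ‖ξ‖^{β−d} dξ < +∞. -/

import Mathlib

open MeasureTheory Complex
open scoped RealInnerProductSpace ENNReal

noncomputable section

/-- `χ_ξ(x) = exp(−|x| Ψ(sign(x) ξ))`. -/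
def chi {d : ℕ} (Ψ : EuclideanSpace ℝ (Fin d) → ℂ) (ξ : EuclideanSpace ℝ (Fin d)) (x : ℝ) : ℂ :=
  Complex.exp (((-|x| : ℝ) : ℂ) * Ψ (Real.sign x • ξ))

/-- `g_{γ,+}(x) = ∫_{ℝ^d} (Re χ_ξ(x))_+ ‖ξ‖^{−γ} dξ`, with values in `[0,∞]`. -/
def gplus {d : ℕ} (Ψ : EuclideanSpace ℝ (Fin d) → ℂ) (γ : ℝ) (x : ℝ) : ℝ≥0∞ :=
  ∫⁻ ξ : EuclideanSpace ℝ (Fin d),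
    ENNReal.ofReal (max ((chi Ψ ξ x).re) 0) * (ENNReal.ofReal ‖ξ‖) ^ (-γ) ∂volume

/-- `g_{γ,−}(x) = ∫_{ℝ^d} (Re χ_ξ(x))_− ‖ξ‖^{−γ} dξ`, with values in `[0,∞]`. -/
def gminus {d : ℕ} (Ψ : EuclideanSpace ℝ (Fin d) → ℂ) (γ : ℝ) (x : ℝ) : ℝ≥0∞ :=
  ∫⁻ ξ : EuclideanSpace ℝ (Fin d),
    ENNReal.ofReal (max (-(chi Ψ ξ x).re) 0) * (ENNReal.ofReal ‖ξ‖) ^ (-γ) ∂volume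

/-- The `f`-energy `E_f(μ) = ∫∫_{G×G} f(t−s) μ(dt)μ(ds)` of a measure on `ℝ`,
for a `[0,∞]`-valued kernel `f`. -/
def energyR (f : ℝ → ℝ≥0∞) (G : Set ℝ) (μ : Measure ℝ) : ℝ≥0∞ :=
  ∫⁻ t in G, ∫⁻ s in G, f (t - s) ∂μ ∂μ

/-- The `f`-capacity `C_f(G) = [inf_{μ ∈ P(G)} E_f(μ)]⁻¹` (with `1/∞ = 0`), the infimum
being over Borel probability measures supported in `G`. -/
def capacityR (f : ℝ → ℝ≥0∞) (G : Set ℝ) : ℝ≥0∞ :=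
  (⨅ (μ : Measure ℝ) (_ : IsProbabilityMeasure μ ∧ μ Gᶜ = 0), energyR f G μ)⁻¹

/-!
Take `μ` of finite energy for `g_{γ,+}`. By Tonelli, its energy is the integral against
`‖ξ‖^{−γ} dξ` of the energies for `(Re χ_ξ)₊`, and these dominate both integrands of the
conclusion. For `(Re χ_ξ)₋` this is because `Re χ_ξ(t − s) = E cos(⟨ξ, X_t⟩ − ⟨ξ, X_s⟩)` is positive
definite: `∫∫ Re χ_ξ(t − s) μ(dt) μ(ds) = E |∫ exp(i⟨ξ, X_t⟩) μ(dt)|² ≥ 0`.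
-/

/-- The increments of `X`, a process on `[0, ∞)`, have the characteristic functions
`E exp(i⟨ξ, X_t − X_s⟩) = exp(−(t − s) Ψ(ξ))` of the increments of a Lévy process with exponent `Ψ`.
The index type is `ℝ`, but the values of `X` at negative times are unconstrained. -/
def HasIncrementExponent {d : ℕ} {Ω : Type*} [MeasurableSpace Ω] (P : Measure Ω)
    (X : ℝ → Ω → EuclideanSpace ℝ (Fin d)) (Ψ : EuclideanSpace ℝ (Fin d) → ℂ) : Prop :=
  ∀ s t : ℝ, 0 ≤ s → s ≤ t → ∀ ξ : EuclideanSpace ℝ (Fin d),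
    ∫ ω, Complex.exp ((⟪ξ, X t ω - X s ω⟫ : ℂ) * Complex.I) ∂P
      = Complex.exp (((-(t - s) : ℝ) : ℂ) * Ψ ξ)

section PositivePart

variable {α : Type*} [MeasurableSpace α] {μ : Measure α}

theorem ofReal_integral_le_lintegral_ofReal (f : α → ℝ) :
    ENNReal.ofReal (∫ a, f a ∂μ) ≤ ∫⁻ a, ENNReal.ofReal (f a) ∂μ := by
  by_cases hf : Integrable f μ
  · refine ENNReal.ofReal_le_of_le_toReal ?_
    rw [integral_eq_lintegral_pos_part_sub_lintegral_neg_part hf]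
    exact sub_le_self _ ENNReal.toReal_nonneg
  · simp [integral_undef hf]

theorem lintegral_ofReal_neg_le_lintegral_ofReal {f : α → ℝ} (hf : Integrable f μ)
    (hpos : 0 ≤ ∫ a, f a ∂μ) :
    ∫⁻ a, ENNReal.ofReal (-f a) ∂μ ≤ ∫⁻ a, ENNReal.ofReal (f a) ∂μ := by
  rw [integral_eq_lintegral_pos_part_sub_lintegral_neg_part hf, sub_nonneg] at hpos
  exact (ENNReal.toReal_le_toReal hf.neg.lintegral_lt_top.ne hf.lintegral_lt_top.ne).1 hpos

end PositivePart

section Energy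

variable {G : Set ℝ} {μ : Measure ℝ}

theorem capacityR_pos_iff {f : ℝ → ℝ≥0∞} :
    0 < capacityR f G ↔ ∃ μ, IsProbabilityMeasure μ ∧ μ Gᶜ = 0 ∧ energyR f G μ < ⊤ := by
  simp only [capacityR, ENNReal.inv_pos, ← lt_top_iff_ne_top, iInf_lt_iff, exists_prop, and_assoc]

theorem energyR_mul_const {f : ℝ → ℝ≥0∞} (hf : Measurable f) [SFinite μ] (c : ℝ≥0∞) :
    energyR (fun x => f x * c) G μ = energyR f G μ * c := by
  have hf₂ : Measurable fun p : ℝ × ℝ => f (p.1 - p.2) := by fun_prop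
  simp only [energyR]
  rw [← lintegral_mul_const _ hf₂.lintegral_prod_right']
  exact lintegral_congr fun t => lintegral_mul_const _ (by fun_prop)

theorem energyR_eq_lintegral_prod {f : ℝ → ℝ≥0∞} (hf : Measurable f) [SFinite μ] :
    energyR f G μ = ∫⁻ p, f (p.1 - p.2) ∂(μ.restrict G).prod (μ.restrict G) :=
  (lintegral_prod (fun p : ℝ × ℝ => f (p.1 - p.2)) (by fun_prop)).symm

theorem energyR_lintegral {α : Type*} [MeasurableSpace α] {m : Measure α} [SFinite m] [SFinite μ]
    {f : α → ℝ → ℝ≥0∞} (hf : Measurable (Function.uncurry f)) :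
    energyR (fun x => ∫⁻ a, f a x ∂m) G μ = ∫⁻ a, energyR (f a) G μ ∂m := by
  have hf₂ : Measurable fun q : (ℝ × ℝ) × α => f q.2 (q.1.1 - q.1.2) :=
    hf.comp (f := fun q : (ℝ × ℝ) × α => (q.2, q.1.1 - q.1.2)) (by fun_prop)
  calc energyR (fun x => ∫⁻ a, f a x ∂m) G μ
      = ∫⁻ p, ∫⁻ a, f a (p.1 - p.2) ∂m ∂(μ.restrict G).prod (μ.restrict G) :=
        energyR_eq_lintegral_prod hf.lintegral_prod_left'
    _ = ∫⁻ a, ∫⁻ p, f a (p.1 - p.2) ∂(μ.restrict G).prod (μ.restrict G) ∂m :=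
        lintegral_lintegral_swap hf₂.aemeasurable
    _ = ∫⁻ a, energyR (f a) G μ ∂m :=
        lintegral_congr fun a => (energyR_eq_lintegral_prod hf.of_uncurry_left).symm

theorem energyR_lintegral_mul {α : Type*} [MeasurableSpace α] {m : Measure α} [SFinite m]
    [SFinite μ] {f : α → ℝ → ℝ≥0∞} (hf : Measurable (Function.uncurry f)) {w : α → ℝ≥0∞}
    (hw : Measurable w) :
    energyR (fun x => ∫⁻ a, f a x * w a ∂m) G μ = ∫⁻ a, energyR (f a) G μ * w a ∂m := by
  rw [energyR_lintegral (hf.mul (hw.comp measurable_fst))]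
  exact lintegral_congr fun a => energyR_mul_const hf.of_uncurry_left (w a)

theorem ofReal_setIntegral_setIntegral_sub_le_energyR (k : ℝ → ℝ) :
    ENNReal.ofReal (∫ t in G, ∫ s in G, k (t - s) ∂μ ∂μ)
      ≤ energyR (fun x => ENNReal.ofReal (max (k x) 0)) G μ := by
  simp only [ENNReal.ofReal_max, ENNReal.ofReal_zero, max_zero]
  calc ENNReal.ofReal (∫ t in G, ∫ s in G, k (t - s) ∂μ ∂μ)
      ≤ ∫⁻ t in G, ENNReal.ofReal (∫ s in G, k (t - s) ∂μ) ∂μ :=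
        ofReal_integral_le_lintegral_ofReal _
    _ ≤ energyR (fun x => ENNReal.ofReal (k x)) G μ :=
        lintegral_mono fun _ => ofReal_integral_le_lintegral_ofReal _

theorem energyR_negPart_le_energyR_posPart [SFinite μ] {k : ℝ → ℝ} (hk : Measurable k)
    (hint : Integrable (fun p : ℝ × ℝ => k (p.1 - p.2)) ((μ.restrict G).prod (μ.restrict G)))
    (hpos : 0 ≤ ∫ p : ℝ × ℝ, k (p.1 - p.2) ∂(μ.restrict G).prod (μ.restrict G)) :
    energyR (fun x => ENNReal.ofReal (max (-k x) 0)) G μ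
      ≤ energyR (fun x => ENNReal.ofReal (max (k x) 0)) G μ := by
  simp only [ENNReal.ofReal_max, ENNReal.ofReal_zero, max_zero]
  rw [energyR_eq_lintegral_prod (by fun_prop), energyR_eq_lintegral_prod (by fun_prop)]
  exact lintegral_ofReal_neg_le_lintegral_ofReal hint hpos

end Energy

section PositiveDefinite

variable {T : Type*} [MeasurableSpace T] (μ : Measure T) [IsFiniteMeasure μ]

theorem integral_prod_cos_sub {f : T → ℝ} (hf : Measurable f) :
    ∫ p : T × T, Real.cos (f p.1 - f p.2) ∂μ.prod μ
      = (∫ t, Real.cos (f t) ∂μ) ^ 2 + (∫ t, Real.sin (f t) ∂μ) ^ 2 := by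
  have hcos : Integrable (fun t => Real.cos (f t)) μ :=
    .of_bound (by fun_prop) 1 (.of_forall fun _ => Real.abs_cos_le_one _)
  have hsin : Integrable (fun t => Real.sin (f t)) μ :=
    .of_bound (by fun_prop) 1 (.of_forall fun _ => Real.abs_sin_le_one _)
  simp only [Real.cos_sub]
  rw [integral_add (hcos.mul_prod hcos) (hsin.mul_prod hsin),
    integral_prod_mul (fun t => Real.cos (f t)) (fun t => Real.cos (f t)),
    integral_prod_mul (fun t => Real.sin (f t)) (fun t => Real.sin (f t)), sq, sq]

theorem integral_prod_integral_cos_sub_nonneg {Ω : Type*} [MeasurableSpace Ω] (P : Measure Ω)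
    [IsFiniteMeasure P] {Y : T → Ω → ℝ} (hY : Measurable (Function.uncurry Y)) :
    0 ≤ ∫ p : T × T, ∫ ω, Real.cos (Y p.1 ω - Y p.2 ω) ∂P ∂μ.prod μ := by
  have hY₁ : Measurable fun q : (T × T) × Ω => Y q.1.1 q.2 :=
    hY.comp (f := fun q : (T × T) × Ω => (q.1.1, q.2)) (by fun_prop)
  have hY₂ : Measurable fun q : (T × T) × Ω => Y q.1.2 q.2 :=
    hY.comp (f := fun q : (T × T) × Ω => (q.1.2, q.2)) (by fun_prop)
  have hint : Integrable (fun q : (T × T) × Ω => Real.cos (Y q.1.1 q.2 - Y q.1.2 q.2))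
      ((μ.prod μ).prod P) :=
    .of_bound (hY₁.sub hY₂).cos.aestronglyMeasurable 1 (.of_forall fun _ => Real.abs_cos_le_one _)
  rw [integral_integral_swap hint]
  refine integral_nonneg fun ω => ?_
  simp only [integral_prod_cos_sub μ (hY.of_uncurry_right (y := ω))]
  positivity

end PositiveDefinite

section Chi

variable {d : ℕ} {Ψ : EuclideanSpace ℝ (Fin d) → ℂ}

theorem measurable_chi (hΨ : Measurable Ψ) :
    Measurable fun q : EuclideanSpace ℝ (Fin d) × ℝ => chi Ψ q.1 q.2 := by
  have hsign : Measurable Real.sign :=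
    .ite measurableSet_Iio measurable_const (.ite measurableSet_Ioi measurable_const
      measurable_const)
  unfold chi
  fun_prop

variable {Ω : Type*} [MeasurableSpace Ω] {P : Measure Ω} [IsProbabilityMeasure P]
  {X : ℝ → Ω → EuclideanSpace ℝ (Fin d)}

theorem HasIncrementExponent.chi_sub (hX : HasIncrementExponent P X Ψ)
    (ξ : EuclideanSpace ℝ (Fin d)) {s t : ℝ} (hs : 0 ≤ s) (ht : 0 ≤ t) :
    chi Ψ ξ (t - s) = ∫ ω, Complex.exp ((⟪ξ, X t ω - X s ω⟫ : ℂ) * Complex.I) ∂P := by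
  rcases lt_trichotomy t s with hts | rfl | hst
  · have hswap := hX t s ht hts.le (-ξ)
    simp only [inner_neg_left, ← inner_neg_right, neg_sub] at hswap
    rw [hswap, chi, abs_of_neg (sub_neg.2 hts), Real.sign_of_neg (sub_neg.2 hts), neg_one_smul,
      neg_neg]
  · simp [chi]
  · rw [hX s t hs hst.le ξ, chi, abs_of_pos (sub_pos.2 hst), Real.sign_of_pos (sub_pos.2 hst),
      one_smul]

theorem HasIncrementExponent.norm_chi_le_one (hX : HasIncrementExponent P X Ψ)
    (ξ : EuclideanSpace ℝ (Fin d)) (x : ℝ) : ‖chi Ψ ξ x‖ ≤ 1 := by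
  have hx : x = max x 0 - max (-x) 0 := (max_zero_sub_eq_self x).symm
  rw [hx, hX.chi_sub ξ (le_max_right _ _) (le_max_right _ _)]
  exact (norm_integral_le_of_norm_le_const (C := 1)
    (.of_forall fun ω => (Complex.norm_exp_ofReal_mul_I _).le)).trans_eq (by simp)

theorem HasIncrementExponent.re_chi_sub (hX : HasIncrementExponent P X Ψ)
    (hXmeas : ∀ t, Measurable (X t)) (ξ : EuclideanSpace ℝ (Fin d)) {s t : ℝ}
    (hs : 0 ≤ s) (ht : 0 ≤ t) :
    (chi Ψ ξ (t - s)).re = ∫ ω, Real.cos (⟪ξ, X t ω⟫ - ⟪ξ, X s ω⟫) ∂P := by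
  have hint : Integrable (fun ω => Complex.exp ((⟪ξ, X t ω - X s ω⟫ : ℂ) * Complex.I)) P :=
    .of_bound (by fun_prop) 1 (.of_forall fun ω => (Complex.norm_exp_ofReal_mul_I _).le)
  rw [hX.chi_sub ξ hs ht, ← RCLike.re_to_complex, ← integral_re hint]
  simp only [RCLike.re_to_complex, Complex.exp_ofReal_mul_I_re, inner_sub_right]

theorem HasIncrementExponent.integral_prod_re_chi_sub_nonneg (hX : HasIncrementExponent P X Ψ)
    (hXmeas : Measurable (Function.uncurry X)) {ν : Measure ℝ} [IsFiniteMeasure ν]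
    (hν : ∀ᵐ t ∂ν, 0 ≤ t) (ξ : EuclideanSpace ℝ (Fin d)) :
    0 ≤ ∫ p : ℝ × ℝ, (chi Ψ ξ (p.1 - p.2)).re ∂ν.prod ν := by
  have hcos : ∀ᵐ p ∂ν.prod ν, (chi Ψ ξ (p.1 - p.2)).re
      = ∫ ω, Real.cos (⟪ξ, X p.1 ω⟫ - ⟪ξ, X p.2 ω⟫) ∂P := by
    filter_upwards [Measure.quasiMeasurePreserving_fst.ae hν,
      Measure.quasiMeasurePreserving_snd.ae hν] with p ht hs
    exact hX.re_chi_sub (fun t => hXmeas.of_uncurry_left) ξ hs ht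
  rw [integral_congr_ae hcos]
  exact integral_prod_integral_cos_sub_nonneg ν P (Y := fun t ω => ⟪ξ, X t ω⟫)
    (measurable_const.inner hXmeas)

theorem HasIncrementExponent.energyR_re_chi_negPart_le (hX : HasIncrementExponent P X Ψ)
    (hΨ : Measurable Ψ) (hXmeas : Measurable (Function.uncurry X)) {G : Set ℝ}
    (hG : G ⊆ Set.Ici 0) (μ : Measure ℝ) [IsFiniteMeasure μ] (ξ : EuclideanSpace ℝ (Fin d)) :
    energyR (fun x => ENNReal.ofReal (max (-(chi Ψ ξ x).re) 0)) G μ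
      ≤ energyR (fun x => ENNReal.ofReal (max (chi Ψ ξ x).re 0)) G μ := by
  have hnonneg : ∀ᵐ t ∂μ.restrict G, 0 ≤ t :=
    (ae_restrict_iff measurableSet_Ici).2 (.of_forall fun t ht => hG ht)
  have hmeas : Measurable fun x => (chi Ψ ξ x).re :=
    Complex.measurable_re.comp (measurable_chi hΨ).of_uncurry_left
  have hmeas₂ : Measurable fun p : ℝ × ℝ => (chi Ψ ξ (p.1 - p.2)).re :=
    hmeas.comp measurable_sub
  refine energyR_negPart_le_energyR_posPart hmeas (.of_bound hmeas₂.aestronglyMeasurable 1 ?_)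
    (hX.integral_prod_re_chi_sub_nonneg hXmeas hnonneg ξ)
  exact .of_forall fun p => (Complex.abs_re_le_norm _).trans (hX.norm_chi_le_one ξ _)

end Chi

theorem stmt7_general {d : ℕ} {Ψ : EuclideanSpace ℝ (Fin d) → ℂ} (hΨ : Measurable Ψ)
    {Ω : Type*} [MeasurableSpace Ω] {P : Measure Ω} [IsProbabilityMeasure P]
    {X : ℝ → Ω → EuclideanSpace ℝ (Fin d)} (hXmeas : Measurable (Function.uncurry X))
    (hX : HasIncrementExponent P X Ψ) {G : Set ℝ} (hG : G ⊆ Set.Ici 0)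
    {w : EuclideanSpace ℝ (Fin d) → ℝ≥0∞} (hw : Measurable w)
    (hcap : 0 < capacityR (fun x => ∫⁻ ξ, ENNReal.ofReal (max (chi Ψ ξ x).re 0) * w ξ) G) :
    ∃ μ : Measure ℝ, IsProbabilityMeasure μ ∧ μ Gᶜ = 0 ∧
      (∫⁻ ξ, ENNReal.ofReal (∫ t in G, ∫ s in G, (chi Ψ ξ (t - s)).re ∂μ ∂μ) * w ξ < ⊤) ∧
      (∫⁻ ξ, (∫⁻ t in G, ∫⁻ s in G,
        ENNReal.ofReal (max (-(chi Ψ ξ (t - s)).re) 0) ∂μ ∂μ) * w ξ < ⊤) := by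
  obtain ⟨μ, hμ, hμG, hfinite⟩ := capacityR_pos_iff.1 hcap
  have hpos : Measurable (Function.uncurry fun ξ x => ENNReal.ofReal (max (chi Ψ ξ x).re 0)) :=
    ((Complex.measurable_re.comp (measurable_chi hΨ)).max measurable_const).ennreal_ofReal
  have henergy : ∫⁻ ξ, energyR (fun x => ENNReal.ofReal (max (chi Ψ ξ x).re 0)) G μ * w ξ < ⊤ := by
    rwa [energyR_lintegral_mul hpos hw] at hfinite
  refine ⟨μ, hμ, hμG, (lintegral_mono fun ξ => ?_).trans_lt henergy,
    (lintegral_mono fun ξ => ?_).trans_lt henergy⟩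
  · gcongr
    exact ofReal_setIntegral_setIntegral_sub_le_energyR fun x => (chi Ψ ξ x).re
  · gcongr
    exact hX.energyR_re_chi_negPart_le hΨ hXmeas hG μ ξ

/-- **Key step (3.3).** Let `X` be a process with Lévy-type exponent `Ψ`,
`G ⊆ [0,∞)` Borel and `β ∈ (0,d)`. If `C_{g_{d−β,+}}(G) > 0`, then there is a Borel
probability measure `μ` supported in `G` with
`∫_{ℝ^d} [∫∫_{G×G} Re χ_ξ(t−s) μ(dt)μ(ds)] ‖ξ‖^{β−d} dξ < ∞` and
`∫_{ℝ^d} [∫∫_{G×G} (Re χ_ξ(t−s))_− μ(dt)μ(ds)] ‖ξ‖^{β−d} dξ < ∞`. -/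
theorem stmt7 {d : ℕ} (hd : 1 ≤ d) (Ψ : EuclideanSpace ℝ (Fin d) → ℂ) (hΨ : Measurable Ψ)
    {Ω : Type*} [MeasurableSpace Ω] (P : Measure Ω) [IsProbabilityMeasure P]
    (X : ℝ → Ω → EuclideanSpace ℝ (Fin d))
    (hXmeas : Measurable fun p : ℝ × Ω => X p.1 p.2)
    (hX : ∀ s t : ℝ, 0 ≤ s → s ≤ t → ∀ ξ : EuclideanSpace ℝ (Fin d),
      ∫ ω, Complex.exp ((⟪ξ, X t ω - X s ω⟫ : ℂ) * Complex.I) ∂P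
        = Complex.exp (((-(t - s) : ℝ) : ℂ) * Ψ ξ))
    (G : Set ℝ) (hG : MeasurableSet G) (hG0 : G ⊆ Set.Ici 0)
    (β : ℝ) (hβ0 : 0 < β) (hβd : β < d)
    (hcap : 0 < capacityR (gplus Ψ ((d : ℝ) - β)) G) :
    ∃ μ : Measure ℝ, IsProbabilityMeasure μ ∧ μ Gᶜ = 0 ∧
      (∫⁻ ξ : EuclideanSpace ℝ (Fin d),
          ENNReal.ofReal (∫ t in G, ∫ s in G, (chi Ψ ξ (t - s)).re ∂μ ∂μ)
            * (ENNReal.ofReal ‖ξ‖) ^ (β - d) ∂volume < ⊤) ∧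
      (∫⁻ ξ : EuclideanSpace ℝ (Fin d),
          (∫⁻ t in G, ∫⁻ s in G, ENNReal.ofReal (max (-(chi Ψ ξ (t - s)).re) 0) ∂μ ∂μ)
            * (ENNReal.ofReal ‖ξ‖) ^ (β - d) ∂volume < ⊤) := by
  refine stmt7_general hΨ hXmeas hX hG0 (w := fun ξ => ENNReal.ofReal ‖ξ‖ ^ (β - d))
    (by fun_prop) ?_
  simpa +unfoldPartialApp only [gplus, neg_sub] using hcap
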